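/- For every n ≥ 2: there exists an (n+1)-ary operation on {0,1,2} that preserves C_3, ≤_2, and B_k for every k with 2 ≤ k ≤ n and satisfies the quasi near-unanimity condition QNU(n+1); and there is no (n+1)-ary operation on {0,1,2} that preserves C_3 and B_k for every k with 2 ≤ k ≤ n+1 and satisfies QNU(n+1). -/

import Mathlib

/-- The three-element domain `{0,1,2}`. -/
abbrev D3 : Type := Fin 3

/-- `n`-ary operations on `{0,1,2}`. -/
abbrev Op (n : ℕ) : Type := (Fin n → D3) → D3

/-- An `n`-ary operation `f` preserves a `k`-ary relation `R`. -/
def Preserves {n k : ℕ} (f : Op n) (R : Set (Fin k → D3)) : Prop :=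
  ∀ t : Fin n → (Fin k → D3), (∀ i, t i ∈ R) → (fun j => f fun i => t i j) ∈ R

/-- `C₃ = {(0,1),(1,2),(2,0)}`. -/
def C3rel : Set (Fin 2 → D3) :=
  { t | (t 0 = 0 ∧ t 1 = 1) ∨ (t 0 = 1 ∧ t 1 = 2) ∨ (t 0 = 2 ∧ t 1 = 0) }

/-- `≤₂ = {(0,0),(0,1),(1,1)}`. -/
def le2rel : Set (Fin 2 → D3) :=
  { t | (t 0 = 0 ∧ t 1 = 0) ∨ (t 0 = 0 ∧ t 1 = 1) ∨ (t 0 = 1 ∧ t 1 = 1) }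

/-- `B_k = {0,1}^k \ {(0,…,0)}`. -/
def BnRel (k : ℕ) : Set (Fin k → D3) :=
  { t | (∀ i, t i = 0 ∨ t i = 1) ∧ ¬ ∀ i, t i = 0 }

/-- The quasi near-unanimity condition `QNU(m)`. -/
def QNU {m : ℕ} (t : Op m) : Prop :=
  ∀ x y : D3, ∀ j : Fin m, t (fun i => if i = j then y else x) = t fun _ => x

/-!
Existence: say that a value is repeated in a tuple if it occurs at least twice, and let the
repeated values of a tuple compete under the cyclic order `0 < 1 < 2 < 0`. A set of values that is
neither empty nor everything has exactly one element whose successor lies outside it; the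
operation returns this winner. The rule commutes with the rotation `a ↦ a + 1`, and a tuple which
is constant up to one entry has that constant as its only repeated value. A `{0,1}`-valued tuple
of length at least three yields `1` exactly when `1` is repeated, which is monotone; and if
`n + 1` tuples of `B_k` with `k ≤ n` are given, two of them have a `1` in the same coordinate.

Non-existence: an operation preserving `C₃` and `B_m` fixes `1`, hence `0`, so under `QNU(m)` it
sends the `m` unit vectors of `B_m` to the zero vector.
-/

section Relations

lemma D3.le_one_iff {a : D3} : a ≤ 1 ↔ a = 0 ∨ a = 1 := by
  decide +revert

lemma mem_C3rel {t : Fin 2 → D3} : t ∈ C3rel ↔ t 1 = t 0 + 1 := by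
  simp only [C3rel, Set.mem_ofPred_eq]
  generalize t 0 = a, t 1 = b
  decide +revert

lemma mem_le2rel {t : Fin 2 → D3} : t ∈ le2rel ↔ t 0 ≤ t 1 ∧ t 1 ≤ 1 := by
  simp only [le2rel, Set.mem_ofPred_eq]
  generalize t 0 = a, t 1 = b
  decide +revert

lemma mem_BnRel {k : ℕ} {t : Fin k → D3} : t ∈ BnRel k ↔ (∀ j, t j ≤ 1) ∧ ∃ j, t j = 1 := by
  simp only [BnRel, Set.mem_ofPred_eq, not_forall, D3.le_one_iff]
  exact and_congr_right fun h => exists_congr fun j =>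
    ⟨(h j).resolve_left, fun hj => by simp [hj]⟩

lemma preserves_C3rel_iff {m : ℕ} {f : Op m} :
    Preserves f C3rel ↔ ∀ x, f (fun i => x i + 1) = f x + 1 := by
  refine ⟨fun hf x => ?_, fun hf t ht => ?_⟩
  · simpa using mem_C3rel.1 (hf (fun i => ![x i, x i + 1]) fun i => mem_C3rel.2 (by simp))
  · simp only [mem_C3rel] at ht ⊢
    simp only [ht, hf]

end Relations

section Repeated

variable {ι α : Type*} {x y : ι → α} {a b : α}

/-- The value `a` occurs at two or more indices of the tuple `x`. On `{0,1}`-valued tuples,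
`IsRepeated x 1` is the threshold condition which drives the construction. -/
def IsRepeated (x : ι → α) (a : α) : Prop :=
  ∃ i j, i ≠ j ∧ x i = a ∧ x j = a

lemma IsRepeated.mono (h : IsRepeated x a) (hxy : ∀ i, x i = a → y i = b) : IsRepeated y b := by
  obtain ⟨i, j, hij, hi, hj⟩ := h
  exact ⟨i, j, hij, hxy i hi, hxy j hj⟩

lemma exists_isRepeated_of_card_lt [Fintype ι] {s : Finset α} (hs : s.card < Fintype.card ι)
    (hx : ∀ i, x i ∈ s) : ∃ a ∈ s, IsRepeated x a := by
  obtain ⟨i, -, j, -, hij, h⟩ :=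
    Finset.exists_ne_map_eq_of_card_lt_of_maps_to (s := Finset.univ) hs fun i _ => hx i
  exact ⟨x i, hx i, i, j, hij, rfl, h.symm⟩

end Repeated

section Winner

variable {ι : Type*} {x : ι → D3} {a b : D3}

/-- The value `a` is repeated in `x` but its cyclic successor `a + 1`, which would beat it, is not.
This selects the output of `winnerOp`; addition in `D3 = Fin 3` is modulo 3. -/
def IsWinner (x : ι → D3) (a : D3) : Prop :=
  IsRepeated x a ∧ ¬ IsRepeated x (a + 1)

lemma IsWinner.unique (ha : IsWinner x a) (hb : IsWinner x b) : a = b := by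
  have trichotomy : ∀ a b : D3, a = b ∨ b = a + 1 ∨ a = b + 1 := by decide
  obtain rfl | rfl | rfl := trichotomy a b
  · rfl
  · exact absurd hb.1 ha.2
  · exact absurd ha.1 hb.2

lemma isRepeated_add_one : IsRepeated (fun i => x i + 1) (a + 1) ↔ IsRepeated x a := by
  simp only [IsRepeated, add_left_inj]

lemma isWinner_add_one : IsWinner (fun i => x i + 1) (a + 1) ↔ IsWinner x a := by
  simp only [IsWinner, isRepeated_add_one]

end Winner

section WinnerOp

variable {n : ℕ} {x : Fin (n + 1) → D3} {a : D3}

open Classical in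
/-- The operation returning the winner among the repeated values of a tuple. If there is none, it
returns the first entry, a fallback that commutes with `a ↦ a + 1`. -/
noncomputable def winnerOp (n : ℕ) : Op (n + 1) := fun x =>
  if h : ∃ a, IsWinner x a then h.choose else x 0

lemma IsWinner.winnerOp_eq (h : IsWinner x a) : winnerOp n x = a := by
  have hex : ∃ a, IsWinner x a := ⟨a, h⟩
  rw [winnerOp, dif_pos hex]
  exact hex.choose_spec.unique h

lemma winnerOp_eq_zero_index (h : ¬ ∃ a, IsWinner x a) : winnerOp n x = x 0 :=
  dif_neg h

lemma winnerOp_add_one (x : Fin (n + 1) → D3) :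
    winnerOp n (fun i => x i + 1) = winnerOp n x + 1 := by
  by_cases h : ∃ a, IsWinner x a
  · obtain ⟨a, ha⟩ := h
    rw [ha.winnerOp_eq, (isWinner_add_one.2 ha).winnerOp_eq]
  · have h' : ¬ ∃ a, IsWinner (fun i => x i + 1) a := fun ⟨a, ha⟩ =>
      h ⟨a - 1, isWinner_add_one.1 (by rwa [sub_add_cancel])⟩
    rw [winnerOp_eq_zero_index h, winnerOp_eq_zero_index h']

lemma winnerOp_ite (hn : 2 ≤ n) (a b : D3) (j : Fin (n + 1)) :
    winnerOp n (fun i => if i = j then b else a) = a := by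
  refine IsWinner.winnerOp_eq ⟨?_, ?_⟩
  · obtain ⟨i, hij, -⟩ := Fin.exists_ne_and_ne_of_two_lt j j (by lia)
    obtain ⟨k, hki, hkj⟩ := Fin.exists_ne_and_ne_of_two_lt i j (by lia)
    exact ⟨k, i, hki, if_neg hkj, if_neg hij⟩
  · have eq_of_val : ∀ i, (if i = j then b else a) = a + 1 → i = j := fun i hi => by
      by_contra hij
      simp [hij] at hi
    rintro ⟨i, k, hik, hi, hk⟩
    exact hik ((eq_of_val i hi).trans (eq_of_val k hk).symm)

open Classical in
lemma winnerOp_of_le_one (hn : 2 ≤ n) (hx : ∀ i, x i ≤ 1) :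
    winnerOp n x = if IsRepeated x 1 then 1 else 0 := by
  split_ifs with h1
  · refine IsWinner.winnerOp_eq ⟨h1, ?_⟩
    rintro ⟨i, -, -, hi, -⟩
    exact absurd (hi ▸ hx i) (by decide)
  · obtain ⟨a, ha, hrep⟩ : ∃ a ∈ ({0, 1} : Finset D3), IsRepeated x a :=
      exists_isRepeated_of_card_lt (by simpa using by lia) fun i => by
        simpa using D3.le_one_iff.1 (hx i)
    obtain rfl | rfl : a = 0 ∨ a = 1 := by simpa using ha
    · exact IsWinner.winnerOp_eq ⟨hrep, h1⟩
    · exact absurd hrep h1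

lemma preserves_winnerOp_C3rel : Preserves (winnerOp n) C3rel :=
  preserves_C3rel_iff.2 winnerOp_add_one

lemma preserves_winnerOp_le2rel (hn : 2 ≤ n) : Preserves (winnerOp n) le2rel := by
  intro t ht
  simp only [mem_le2rel] at ht ⊢
  have mono (h : IsRepeated (t · 0) 1) : IsRepeated (t · 1) 1 :=
    h.mono fun i hi => le_antisymm (ht i).2 (hi ▸ (ht i).1)
  rw [winnerOp_of_le_one hn fun i => (ht i).1.trans (ht i).2,
    winnerOp_of_le_one hn fun i => (ht i).2]
  split_ifs <;> simp_all

lemma preserves_winnerOp_BnRel {k : ℕ} (hn : 2 ≤ n) (hk : k ≤ n) :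
    Preserves (winnerOp n) (BnRel k) := by
  intro t ht
  simp only [mem_BnRel] at ht ⊢
  choose hle p hp using ht
  obtain ⟨i, i', hii', hpi⟩ :=
    Fintype.exists_ne_map_eq_of_card_lt p (by simpa using Nat.lt_succ_of_le hk)
  have hrep : IsRepeated (t · (p i)) 1 := ⟨i, i', hii', hp i, hpi ▸ hp i'⟩
  refine ⟨fun j => ?_, p i, ?_⟩
  · rw [winnerOp_of_le_one hn fun i => hle i j]
    split_ifs <;> decide
  · rw [winnerOp_of_le_one hn fun i' => hle i' (p i), if_pos hrep]

lemma qnu_winnerOp (hn : 2 ≤ n) : QNU (winnerOp n) := fun a b j => by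
  rw [winnerOp_ite hn]
  simpa using (winnerOp_ite hn a a j).symm

end WinnerOp

lemma QNU.not_preserves_BnRel {m : ℕ} {t : Op m} (hQ : QNU t) (hC : Preserves t C3rel) :
    ¬ Preserves t (BnRel m) := by
  intro hB
  obtain ⟨-, j, hj⟩ := mem_BnRel.1 <| hB (fun i j => if i = j then 1 else 0) fun i =>
    mem_BnRel.2 ⟨fun j => by split_ifs <;> decide, i, if_pos rfl⟩
  have map_one : t (fun _ => 1) = 1 := by
    obtain ⟨-, -, h⟩ := mem_BnRel.1 <| hB (fun _ _ => 1) fun _ =>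
      mem_BnRel.2 ⟨fun _ => le_rfl, j, rfl⟩
    exact h
  have map_zero : t (fun _ => 0) = 1 := (hQ 0 1 j).symm.trans hj
  have rotate : t (fun _ => 1) = t (fun _ => 0) + 1 := by
    simpa using preserves_C3rel_iff.1 hC fun _ => 0
  rw [map_one, map_zero] at rotate
  exact absurd rotate (by decide)

/-- For every `n ≥ 2`: `QNU(n+1)` can be realized by an operation preserving `C₃`, `≤₂` and
`B_k` for `2 ≤ k ≤ n`, but not by an operation preserving `C₃` and `B_k` for
`2 ≤ k ≤ n+1`. -/
theorem stmt18 :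
    ∀ n : ℕ, 2 ≤ n →
      (∃ t : Op (n + 1), Preserves t C3rel ∧ Preserves t le2rel ∧
        (∀ k, 2 ≤ k → k ≤ n → Preserves t (BnRel k)) ∧ QNU t) ∧
      ¬ (∃ t : Op (n + 1), Preserves t C3rel ∧
        (∀ k, 2 ≤ k → k ≤ n + 1 → Preserves t (BnRel k)) ∧ QNU t) := by
  intro n hn
  refine ⟨⟨winnerOp n, preserves_winnerOp_C3rel, preserves_winnerOp_le2rel hn,
    fun k _ hk => preserves_winnerOp_BnRel hn hk, qnu_winnerOp hn⟩, ?_⟩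
  rintro ⟨t, hC, hB, hQ⟩
  exact hQ.not_preserves_BnRel hC (hB (n + 1) (by lia) le_rfl)
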